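/- Let (X,d) be a metric space, p ∈ X, and define i_p(x,y) = d(x,y)/(d(x,p)·d(y,p)) for x,y ∈ X∖{p}. Define d_p(x,y) as the infimum over finite chains x = x₀, x₁, …, x_k = y in X∖{p} of ∑ i_p(x_i, x_{i+1}). Then for all x,y ∈ X∖{p}, (1/4)·i_p(x,y) ≤ d_p(x,y) ≤ i_p(x,y). -/

import Mathlib

open Metric

/-- The inversion kernel `i_p(x,y) = d(x,y)/(d(x,p)·d(y,p))`. -/
noncomputable def invKernel {X : Type*} [MetricSpace X] (p x y : X) : ℝ :=
  dist x y / (dist x p * dist y p)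

/-- The set of all chain sums `∑ i_p(x_i, x_{i+1})` over finite chains
`x = x₀, x₁, …, x_k = y` of points in `X ∖ {p}`. -/
noncomputable def chainSums {X : Type*} [MetricSpace X] (p x y : X) : Set ℝ :=
  {s | ∃ c : List X, c ≠ [] ∧ c.head? = some x ∧ c.getLast? = some y ∧
    (∀ z ∈ c, z ≠ p) ∧
    s = ((c.zip c.tail).map (fun q => invKernel p q.1 q.2)).sum}

theorem invKernel_nonneg' {X : Type*} [MetricSpace X] (p x y : X) : 0 ≤ invKernel p x y := by
  unfold invKernel; positivity

theorem invKernel_eq' {X : Type*} [MetricSpace X] (p x y : X) :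
    invKernel p x y = dist x y * ((dist x p)⁻¹ * (dist y p)⁻¹) := by
  unfold invKernel; rw [div_eq_mul_inv, mul_inv]

theorem invKernel_lip {X : Type*} [MetricSpace X] (p x y : X) (hx : x ≠ p) (hy : y ≠ p) :
    |(dist x p)⁻¹ - (dist y p)⁻¹| ≤ invKernel p x y := by
  have h1 : 0 < dist x p := dist_pos.2 hx
  have h2 : 0 < dist y p := dist_pos.2 hy
  unfold invKernel
  have e : (dist x p)⁻¹ - (dist y p)⁻¹ = (dist y p - dist x p) / (dist x p * dist y p) := by
    field_simp
  rw [e, abs_div, abs_of_pos (mul_pos h1 h2)]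
  gcongr
  rw [dist_comm x y]
  exact abs_dist_sub_le y x p

theorem invKernel_upper {X : Type*} [MetricSpace X] (p x y : X) (hx : x ≠ p) (hy : y ≠ p) :
    invKernel p x y ≤ (dist x p)⁻¹ + (dist y p)⁻¹ := by
  have h1 : 0 < dist x p := dist_pos.2 hx
  have h2 : 0 < dist y p := dist_pos.2 hy
  unfold invKernel
  have e : (dist x p)⁻¹ + (dist y p)⁻¹ = (dist x p + dist y p) / (dist x p * dist y p) := by
    field_simp
    ring
  rw [e]
  gcongr
  exact dist_triangle_right x y p

theorem chain_key {X : Type*} [MetricSpace X] (p y : X) (m : ℝ) (hm : 0 ≤ m) (l : List X) :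
    ∀ x : X, (x :: l).getLast? = some y → (∀ z ∈ x :: l, z ≠ p) →
    0 ≤ (((x :: l).zip l).map (fun q => invKernel p q.1 q.2)).sum ∧
    (∀ z ∈ x :: l,
      |(dist x p)⁻¹ - (dist z p)⁻¹| ≤ (((x :: l).zip l).map (fun q => invKernel p q.1 q.2)).sum ∧
      |(dist z p)⁻¹ - (dist y p)⁻¹| ≤ (((x :: l).zip l).map (fun q => invKernel p q.1 q.2)).sum) ∧
    ((∀ z ∈ x :: l, m ≤ (dist z p)⁻¹) →
      dist x y * (m * m) ≤ (((x :: l).zip l).map (fun q => invKernel p q.1 q.2)).sum) := by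
  induction l with
  | nil =>
    intro x hl hp
    simp at hl
    subst hl
    simp
  | cons w l ih =>
    intro x hl hp
    have hl' : (w :: l).getLast? = some y := by simpa using hl
    obtain ⟨h0, h1, h2⟩ := ih w hl' (fun z hz => hp z (List.mem_cons_of_mem _ hz))
    have hxp : x ≠ p := hp x (by simp)
    have hwp : w ≠ p := hp w (by simp)
    have hk := invKernel_nonneg' p x w
    have hL := invKernel_lip p x w hxp hwp
    simp only [List.zip_cons_cons, List.map_cons, List.sum_cons]
    set S := (((w :: l).zip l).map (fun q => invKernel p q.1 q.2)).sum with hS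
    refine ⟨by linarith, ?_, ?_⟩
    · intro z hz
      rcases List.mem_cons.1 hz with rfl | hz
      · obtain ⟨-, h4⟩ := h1 w (by simp)
        have := abs_sub_le (dist z p)⁻¹ (dist w p)⁻¹ (dist y p)⁻¹
        refine ⟨?_, by linarith⟩
        rw [sub_self, abs_zero]; linarith
      · obtain ⟨h3, h4⟩ := h1 z hz
        have := abs_sub_le (dist x p)⁻¹ (dist w p)⁻¹ (dist z p)⁻¹
        exact ⟨by linarith, by linarith⟩
    · intro h
      have h3 := h2 (fun z hz => h z (List.mem_cons_of_mem _ hz))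
      have h4 : dist x w * (m * m) ≤ invKernel p x w := by
        rw [invKernel_eq']
        have := h x (by simp)
        have := h w (by simp)
        gcongr
      have h5 : dist x y * (m * m) ≤ (dist x w + dist w y) * (m * m) := by
        gcongr
        exact dist_triangle x w y
      linarith

theorem chain_lower {X : Type*} [MetricSpace X] (p x y : X) (hx : x ≠ p) (hy : y ≠ p)
    (s : ℝ) (hs : s ∈ chainSums p x y) : (1 / 4) * invKernel p x y ≤ s := by
  obtain ⟨c, -, hh, hl, hp, rfl⟩ := hs
  cases c with
  | nil => simp at hh
  | cons a l =>
    simp at hh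
    subst hh
    have hU := invKernel_upper p a y hx hy
    have pa : 0 ≤ (dist a p)⁻¹ := by positivity
    have py : 0 ≤ (dist y p)⁻¹ := by positivity
    have ma := le_max_left (dist a p)⁻¹ (dist y p)⁻¹
    have my := le_max_right (dist a p)⁻¹ (dist y p)⁻¹
    have hE := invKernel_eq' p a y
    have hc := max_choice (dist a p)⁻¹ (dist y p)⁻¹
    set M := max (dist a p)⁻¹ (dist y p)⁻¹
    obtain ⟨h0, h1, h2⟩ := chain_key p y (M / 2) (by linarith) l a hl hp
    rw [List.tail_cons]
    by_cases h : ∀ z ∈ a :: l, M / 2 ≤ (dist z p)⁻¹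
    · have h3 := h2 h
      have : dist a y * ((dist a p)⁻¹ * (dist y p)⁻¹) ≤ dist a y * (M * M) := by
        gcongr
      linarith
    · push Not at h
      obtain ⟨z, hz, hzm⟩ := h
      obtain ⟨h3, h4⟩ := h1 z hz
      have h5 := (abs_le.1 h3)
      have h6 := (abs_le.1 h4)
      have h7 := le_abs_self ((dist a p)⁻¹ - (dist z p)⁻¹)
      have h8 := neg_abs_le ((dist z p)⁻¹ - (dist y p)⁻¹)
      rcases hc with hc | hc <;> linarith

/-- For all `x, y ∈ X ∖ {p}`, `(1/4)·i_p(x,y) ≤ d_p(x,y) ≤ i_p(x,y)`, where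
`d_p` is the infimum of chain sums. -/
theorem inversion_distance_comparable {X : Type*} [MetricSpace X]
    (p x y : X) (hx : x ≠ p) (hy : y ≠ p) :
    (1 / 4) * invKernel p x y ≤ sInf (chainSums p x y) ∧
      sInf (chainSums p x y) ≤ invKernel p x y := by
  have hmem : invKernel p x y ∈ chainSums p x y := by
    refine ⟨[x, y], by simp, by simp, by simp, ?_, by simp⟩
    intro z hz
    simp at hz
    rcases hz with rfl | rfl <;> assumption
  refine ⟨le_csInf ⟨_, hmem⟩ (chain_lower p x y hx hy), csInf_le ⟨_, chain_lower p x y hx hy⟩ hmem⟩
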